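/- arXiv:1007.1375 — 7 statements merged into one kernel-verified Lean document; each statement's English description precedes it below -/
import Mathlib

section
/- Let V be a finite set of points in the real plane ℝ², not all contained in a single line, such that |V| is an odd number and V is 3-bounded (every line spanned by two distinct points of V contains at most 3 points of V). Then V spans a simple wedge, i.e., there exist three distinct points a, b, c ∈ V such that both the line through a and b and the line through a and c are simple lines of V. -/
/-- `L_{a,b}` is a simple line of `V`: `a, b` are distinct points of `V` and no
point of `V` other than `a` and `b` is collinear with `a` and `b`. -/
def SimpleLine (V : Set (ℝ × ℝ)) (a b : ℝ × ℝ) : Prop :=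
  a ∈ V ∧ b ∈ V ∧ a ≠ b ∧
    ∀ c ∈ V, Collinear ℝ ({a, b, c} : Set (ℝ × ℝ)) → c = a ∨ c = b

/-- `V` is 3-bounded: for all distinct `a, b ∈ V`, at most `3` points of `V`
are collinear with `a` and `b`. -/
def ThreeBounded (V : Set (ℝ × ℝ)) : Prop :=
  ∀ a ∈ V, ∀ b ∈ V, a ≠ b →
    ({c ∈ V | Collinear ℝ ({a, b, c} : Set (ℝ × ℝ))}).ncard ≤ 3

/-- `x 0, x 1, …, x (t-1)` (corresponding to `x_1, …, x_t`, so `1 ≤ t`) is an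
orbit of the simple line `L_{a,b}` in `V`:
(ℵ) each `x i` is a point of `V` different from `a` and `b`;
(ℶ) the points `x_1, …, x_{t-1}` are pairwise distinct;
(ℷ)/(ℸ) consecutive points are joined alternately through `b` and `a`:
`x_{2m}` is collinear with `b` and `x_{2m-1}`, and `x_{2m+1}` is collinear with
`a` and `x_{2m}` (in the `0`-based indexing below, `x (k+1)` is collinear with
`b` and `x k` for even `k`, and with `a` and `x k` for odd `k`). -/
def IsOrbit (V : Set (ℝ × ℝ)) (a b : ℝ × ℝ) (t : ℕ) (x : ℕ → ℝ × ℝ) : Prop :=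
  1 ≤ t ∧
  (∀ i < t, x i ∈ V ∧ x i ≠ a ∧ x i ≠ b) ∧
  (∀ i < t - 1, ∀ j < t - 1, i ≠ j → x i ≠ x j) ∧
  ∀ k, k + 1 < t →
    (Even k → Collinear ℝ ({b, x k, x (k + 1)} : Set (ℝ × ℝ))) ∧
    (Odd k → Collinear ℝ ({a, x k, x (k + 1)} : Set (ℝ × ℝ)))

/-- An orbit is open if `t = 1`, or `t > 1` and its first and last points differ. -/
def OpenOrbit (V : Set (ℝ × ℝ)) (a b : ℝ × ℝ) (t : ℕ) (x : ℕ → ℝ × ℝ) : Prop :=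
  IsOrbit V a b t x ∧ (t = 1 ∨ (1 < t ∧ x 0 ≠ x (t - 1)))

/-- An orbit is closed if `t > 1` and its first and last points coincide. -/
def ClosedOrbit (V : Set (ℝ × ℝ)) (a b : ℝ × ℝ) (t : ℕ) (x : ℕ → ℝ × ℝ) : Prop :=
  IsOrbit V a b t x ∧ 1 < t ∧ x 0 = x (t - 1)

/-- An orbit is maximal if it cannot be extended by one more point of `V`. -/
def MaximalOrbit (V : Set (ℝ × ℝ)) (a b : ℝ × ℝ) (t : ℕ) (x : ℕ → ℝ × ℝ) : Prop :=
  IsOrbit V a b t x ∧ ¬ ∃ y ∈ V, IsOrbit V a b (t + 1) (Function.update x t y)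

/-- Twice the signed area of the triangle `a b c`. -/
def crossD (a b c : ℝ × ℝ) : ℝ :=
  (b.1 - a.1) * (c.2 - a.2) - (b.2 - a.2) * (c.1 - a.1)

/-- Squared Euclidean distance. -/
def sqD (a b : ℝ × ℝ) : ℝ := (b.1 - a.1) ^ 2 + (b.2 - a.2) ^ 2

lemma sqD_pos {a b : ℝ × ℝ} (h : a ≠ b) : 0 < sqD a b := by
  unfold sqD
  by_contra hn
  apply h
  have h1 : (b.1 - a.1) ^ 2 = 0 := by nlinarith [sq_nonneg (b.1 - a.1), sq_nonneg (b.2 - a.2)]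
  have h2 : (b.2 - a.2) ^ 2 = 0 := by nlinarith [sq_nonneg (b.1 - a.1), sq_nonneg (b.2 - a.2)]
  have h3 := pow_eq_zero_iff (two_ne_zero) |>.1 h1
  have h4 := pow_eq_zero_iff (two_ne_zero) |>.1 h2
  ext <;> linarith

lemma param_of_crossD {a b c : ℝ × ℝ} (hab : a ≠ b) (h : crossD a b c = 0) :
    ∃ t : ℝ, c = a + t • (b - a) := by
  have hp := sqD_pos hab
  refine ⟨((c.1 - a.1) * (b.1 - a.1) + (c.2 - a.2) * (b.2 - a.2)) / sqD a b, ?_⟩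
  unfold crossD at h
  ext
  · simp only [Prod.fst_add, Prod.smul_fst, Prod.fst_sub, smul_eq_mul]
    rw [div_mul_eq_mul_div, ← sub_eq_iff_eq_add', eq_div_iff hp.ne']
    unfold sqD
    linear_combination (-(b.2 - a.2)) * h
  · simp only [Prod.snd_add, Prod.smul_snd, Prod.snd_sub, smul_eq_mul]
    rw [div_mul_eq_mul_div, ← sub_eq_iff_eq_add', eq_div_iff hp.ne']
    unfold sqD
    linear_combination (b.1 - a.1) * h

lemma collinear_of_crossD {S : Set (ℝ × ℝ)} {a b : ℝ × ℝ} (hab : a ≠ b)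
    (h : ∀ c ∈ S, crossD a b c = 0) : Collinear ℝ S := by
  rw [collinear_iff_exists_forall_eq_smul_vadd]
  refine ⟨a, b - a, fun c hc => ?_⟩
  obtain ⟨t, ht⟩ := param_of_crossD hab (h c hc)
  exact ⟨t, by rw [ht, vadd_eq_add, add_comm]⟩

lemma collinear_iff_crossD {a b c : ℝ × ℝ} (hab : a ≠ b) :
    Collinear ℝ ({a, b, c} : Set (ℝ × ℝ)) ↔ crossD a b c = 0 := by
  constructor
  · intro h
    rw [collinear_iff_exists_forall_eq_smul_vadd] at h
    obtain ⟨p, v, h⟩ := h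
    obtain ⟨r, hr⟩ := h a (by simp)
    obtain ⟨s, hs⟩ := h b (by simp)
    obtain ⟨t, ht⟩ := h c (by simp)
    subst hr hs ht
    simp [crossD]
    ring
  · intro h
    apply collinear_of_crossD hab
    rintro x (rfl | rfl | rfl)
    · simp [crossD]
    · simp [crossD]; ring
    · exact h

lemma kelly_step {a b p x y : ℝ × ℝ} {t1 t2 : ℝ} (hab : a ≠ b) (hD : crossD a b p ≠ 0)
    (hx : x = a + t1 • (b - a)) (hy : y = a + t2 • (b - a)) (ht : t1 ≠ t2)
    (hs : ((t1 - t2) * sqD a b) ^ 2 ≤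
      ((a.1 - p.1) * (b.1 - a.1) + (a.2 - p.2) * (b.2 - a.2) + t2 * sqD a b) ^ 2) :
    crossD p y x ≠ 0 ∧ crossD p y x ^ 2 / sqD p y < crossD a b p ^ 2 / sqD a b := by
  have hp := sqD_pos hab
  have h1 : crossD p y x = crossD a b p * (t1 - t2) := by
    subst hx hy
    simp [crossD]
    ring
  have hne : crossD p y x ≠ 0 := by
    rw [h1]; exact mul_ne_zero hD (sub_ne_zero.2 ht)
  have hpy : p ≠ y := by
    rintro rfl
    apply hne
    simp [crossD]
  have hq := sqD_pos hpy
  refine ⟨hne, ?_⟩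
  have h2 : sqD a b * sqD p y = crossD a b p ^ 2 +
      ((a.1 - p.1) * (b.1 - a.1) + (a.2 - p.2) * (b.2 - a.2) + t2 * sqD a b) ^ 2 := by
    subst hy
    simp [crossD, sqD]
    ring
  have hD2 : 0 < crossD a b p ^ 2 := by positivity
  rw [div_lt_div_iff₀ hq hp, h1]
  have h3 : ((t1 - t2) * sqD a b) ^ 2 < sqD a b * sqD p y := by linarith
  have h4 : (t1 - t2) ^ 2 * sqD a b < sqD p y := by
    by_contra hn
    push Not at hn
    have := mul_le_mul_of_nonneg_left hn hp.le
    nlinarith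
  have h5 := mul_lt_mul_of_pos_left h4 hD2
  calc _ = crossD a b p ^ 2 * ((t1 - t2) ^ 2 * sqD a b) := by ring
    _ < _ := h5

lemma same_sign {s t : ℝ} (h : 0 ≤ s * t) : (s - t) ^ 2 ≤ t ^ 2 ∨ (t - s) ^ 2 ≤ s ^ 2 := by
  rcases le_total (s ^ 2) (t ^ 2) with h1 | h1
  · left
    have : s ^ 2 ≤ s * t := by
      have := sq_le_sq.1 h1
      rw [← abs_of_nonneg h, abs_mul, ← sq_abs s, sq]
      gcongr
    nlinarith
  · right
    have : t ^ 2 ≤ s * t := by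
      have := sq_le_sq.1 h1
      rw [← abs_of_nonneg h, abs_mul, ← sq_abs t, sq]
      gcongr
    nlinarith

lemma three_signs (r s t : ℝ) : 0 ≤ r * s ∨ 0 ≤ r * t ∨ 0 ≤ s * t := by
  rcases le_total 0 r with hr | hr <;> rcases le_total 0 s with hs | hs <;>
  rcases le_total 0 t with ht | ht <;>
  first
  | exact Or.inl (mul_nonneg hr hs)
  | exact Or.inl (mul_nonneg_of_nonpos_of_nonpos hr hs)
  | exact Or.inr (Or.inl (mul_nonneg hr ht))
  | exact Or.inr (Or.inl (mul_nonneg_of_nonpos_of_nonpos hr ht))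
  | exact Or.inr (Or.inr (mul_nonneg hs ht))
  | exact Or.inr (Or.inr (mul_nonneg_of_nonpos_of_nonpos hs ht))

/-- Sylvester–Gallai. -/
lemma exists_simpleLine (V : Set (ℝ × ℝ)) (hfin : V.Finite) (hline : ¬ Collinear ℝ V) :
    ∃ a b, SimpleLine V a b := by
  by_contra hno
  push Not at hno
  let T : Set ((ℝ × ℝ) × (ℝ × ℝ) × (ℝ × ℝ)) :=
    {q | q ∈ V ×ˢ (V ×ˢ V) ∧ crossD q.1 q.2.1 q.2.2 ≠ 0}
  have hT : T.Finite := (hfin.prod (hfin.prod hfin)).subset (fun q hq => hq.1)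
  have hTne : T.Nonempty := by
    by_contra hem
    rw [Set.not_nonempty_iff_eq_empty] at hem
    apply hline
    have hsub : ¬ V.Subsingleton := fun h => hline (by
      rcases h.eq_empty_or_singleton with h | ⟨x, h⟩
      · rw [h]; exact collinear_empty ℝ _
      · rw [h]; exact collinear_singleton ℝ _)
    rw [Set.not_subsingleton_iff] at hsub
    obtain ⟨a, ha, b, hb, hab⟩ := hsub
    apply collinear_of_crossD hab
    intro c hc
    by_contra hcr
    have : (a, b, c) ∈ T := ⟨⟨ha, hb, hc⟩, hcr⟩
    rw [hem] at this
    exact this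
  obtain ⟨⟨a, b, p⟩, ⟨⟨ha, hb, hp⟩, hD⟩, hmin⟩ :=
    Set.exists_min_image T (fun q => crossD q.1 q.2.1 q.2.2 ^ 2 / sqD q.1 q.2.1) hT hTne
  simp only at ha hb hp hD hmin
  have hab : a ≠ b := by
    rintro rfl
    apply hD
    simp [crossD]
  have key : ∀ x ∈ V, ∀ y ∈ V, ∀ t1 t2 : ℝ, x = a + t1 • (b - a) → y = a + t2 • (b - a) →
      t1 ≠ t2 → ((a.1 - p.1) * (b.1 - a.1) + (a.2 - p.2) * (b.2 - a.2) + t1 * sqD a b) *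
        ((a.1 - p.1) * (b.1 - a.1) + (a.2 - p.2) * (b.2 - a.2) + t2 * sqD a b) < 0 := by
    intro x hx y hy t1 t2 h1 h2 ht
    by_contra hn
    push Not at hn
    rcases same_sign hn with h | h
    · obtain ⟨k1, k2⟩ := kelly_step hab hD h1 h2 ht (le_trans (le_of_eq (by ring)) h)
      exact absurd (hmin (p, y, x) ⟨⟨hp, hy, hx⟩, k1⟩) (not_le.2 k2)
    · obtain ⟨k1, k2⟩ := kelly_step hab hD h2 h1 ht.symm (le_trans (le_of_eq (by ring)) h)
      exact absurd (hmin (p, x, y) ⟨⟨hp, hx, hy⟩, k1⟩) (not_le.2 k2)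
  have hc : ∃ c ∈ V, crossD a b c = 0 ∧ c ≠ a ∧ c ≠ b := by
    by_contra hcn
    apply hno a b
    refine ⟨ha, hb, hab, fun c hc hcol => ?_⟩
    rw [collinear_iff_crossD hab] at hcol
    by_contra hne
    push Not at hne
    exact hcn ⟨c, hc, hcol, hne⟩
  obtain ⟨c, hcV, hcD, hca, hcb⟩ := hc
  obtain ⟨t, ht⟩ := param_of_crossD hab hcD
  have ht0 : (0 : ℝ) ≠ t := by
    rintro rfl
    exact hca (by simpa using ht)
  have ht1 : (1 : ℝ) ≠ t := by
    rintro rfl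
    exact hcb (by simpa using ht)
  have e0 : a = a + (0 : ℝ) • (b - a) := by simp
  have e1 : b = a + (1 : ℝ) • (b - a) := by simp
  rcases three_signs _ _ _ with h | h | h
  · exact absurd h (not_le.2 (key a ha b hb 0 1 e0 e1 zero_ne_one))
  · exact absurd h (not_le.2 (key a ha c hcV 0 t e0 ht ht0))
  · exact absurd h (not_le.2 (key b hb c hcV 1 t e1 ht ht1))

/-- A finite non-collinear `3`-bounded set of points of odd
cardinality in the plane spans a simple wedge. -/
theorem odd_three_bounded_has_simple_wedge (V : Set (ℝ × ℝ)) (hfin : V.Finite)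
    (hline : ¬ Collinear ℝ V) (hodd : Odd V.ncard) (hbd : ThreeBounded V) :
    ∃ a ∈ V, ∃ b ∈ V, ∃ c ∈ V, a ≠ b ∧ a ≠ c ∧ b ≠ c ∧
      SimpleLine V a b ∧ SimpleLine V a c := by
  obtain ⟨a, b, hS⟩ := exists_simpleLine V hfin hline
  obtain ⟨ha, hb, hab, hsim⟩ := id hS
  by_contra hcon
  have hno : ∀ x ∈ V, x ≠ a → x ≠ b → ∃ c ∈ V, crossD a x c = 0 ∧ c ≠ a ∧ c ≠ x := by
    intro x hx hxa hxb
    by_contra hcn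
    apply hcon
    refine ⟨a, ha, b, hb, x, hx, hab, hxa.symm, hxb.symm, hS, ha, hx, hxa.symm, ?_⟩
    intro c hc hcol
    rw [collinear_iff_crossD hxa.symm] at hcol
    by_contra hne
    push Not at hne
    exact hcn ⟨c, hc, hcol, hne⟩
  have huniq : ∀ x ∈ V, x ≠ a → ∀ c ∈ V, ∀ d ∈ V, crossD a x c = 0 → crossD a x d = 0 →
      c ≠ a → c ≠ x → d ≠ a → d ≠ x → c = d := by
    intro x hx hxa c hc d hd hcD hdD hca hcx hda hdx
    by_contra hcd
    have hle := hbd a ha x hx hxa.symm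
    have hsub : (({a, x, c, d} : Finset (ℝ × ℝ)) : Set (ℝ × ℝ)) ⊆
        {c ∈ V | Collinear ℝ ({a, x, c} : Set (ℝ × ℝ))} := by
      intro z hz
      simp only [Finset.coe_insert, Finset.coe_singleton, Set.mem_insert_iff,
        Set.mem_singleton_iff] at hz
      simp only [Set.mem_setOf_eq, collinear_iff_crossD hxa.symm]
      rcases hz with rfl | rfl | rfl | rfl
      · exact ⟨ha, by simp [crossD]⟩
      · exact ⟨hx, by simp [crossD]; ring⟩
      · exact ⟨hc, hcD⟩
      · exact ⟨hd, hdD⟩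
    have h4 := Set.ncard_le_ncard hsub (hfin.subset (fun z hz => hz.1))
    rw [Set.ncard_coe_finset] at h4
    have : ({a, x, c, d} : Finset (ℝ × ℝ)).card = 4 := by
      rw [Finset.card_insert_of_notMem, Finset.card_insert_of_notMem,
        Finset.card_insert_of_notMem, Finset.card_singleton]
      · simpa using hcd
      · simp [hcx.symm, hdx.symm]
      · simp [hxa.symm, hca.symm, hda.symm]
    omega
  choose! f hfV hfD hfa hfx using hno
  have hsymm : ∀ x c, crossD a x c = 0 → crossD a c x = 0 := by
    intro x c h
    unfold crossD at *
    linarith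
  have hfb : ∀ x ∈ V, x ≠ a → x ≠ b → f x ≠ b := by
    intro x hx hxa hxb hfb
    have h := hfD x hx hxa hxb
    rw [hfb] at h
    have := hsim x hx ((collinear_iff_crossD hab).2 (hsymm _ _ h))
    tauto
  let W : Finset (ℝ × ℝ) := (hfin.toFinset.erase a).erase b
  have hW : ∀ x, x ∈ W ↔ x ≠ b ∧ x ≠ a ∧ x ∈ V := by
    intro x
    simp [W]
  have hsum : ∑ x ∈ W, (1 : ZMod 2) = 0 := by
    refine Finset.sum_involution (fun x _ => f x) ?_ ?_ ?_ ?_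
    · intro x hx
      decide
    · intro x hx _
      obtain ⟨h1, h2, h3⟩ := (hW x).1 hx
      exact hfx x h3 h2 h1
    · intro x hx
      obtain ⟨h1, h2, h3⟩ := (hW x).1 hx
      exact (hW _).2 ⟨hfb x h3 h2 h1, hfa x h3 h2 h1, hfV x h3 h2 h1⟩
    · intro x hx
      obtain ⟨h1, h2, h3⟩ := (hW x).1 hx
      have k1 := hfb x h3 h2 h1
      have k2 := hfa x h3 h2 h1
      have k3 := hfV x h3 h2 h1
      exact huniq (f x) k3 k2 _ (hfV _ k3 k2 k1) _ h3 (hfD _ k3 k2 k1)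
        (hsymm _ _ (hfD x h3 h2 h1)) (hfa _ k3 k2 k1) (hfx _ k3 k2 k1) h2
        (hfx x h3 h2 h1).symm
  have heven : Even W.card := by
    rw [← ZMod.natCast_eq_zero_iff_even]
    simpa using hsum
  have hcard : W.card + 2 = V.ncard := by
    have h1 : (hfin.toFinset.erase a).card + 1 = hfin.toFinset.card :=
      Finset.card_erase_add_one (by simpa using ha)
    have h2 : W.card + 1 = (hfin.toFinset.erase a).card :=
      Finset.card_erase_add_one (by simp [hab.symm, hb])
    rw [Set.ncard_eq_toFinset_card V hfin]
    omega
  rw [← hcard] at hodd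
  obtain ⟨m, hm⟩ := heven
  obtain ⟨k, hk⟩ := hodd
  omega
end

section
/- Let V be a finite set of points in the real plane ℝ², not all contained in a single line, such that |V| is an odd number and V is 3-bounded. Then a simple wedge can be created from every simple line of V: for every pair of distinct points a, b ∈ V such that L_{a,b} is a simple line of V, there exists a point c ∈ V \ {a,b} such that either L_{a,c} or L_{b,c} is a simple line of V. -/
/-- In a finite non-collinear `3`-bounded set of odd size, a
simple wedge can be created from every simple line. -/
theorem simple_wedge_from_every_simple_line (V : Set (ℝ × ℝ)) (hfin : V.Finite)
    (hline : ¬ Collinear ℝ V) (hodd : Odd V.ncard) (hbd : ThreeBounded V)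
    (a b : ℝ × ℝ) (hab : SimpleLine V a b) :
    ∃ c ∈ V, c ≠ a ∧ c ≠ b ∧ (SimpleLine V a c ∨ SimpleLine V b c) := by
  classical
  obtain ⟨ha, hb, hne, hs⟩ := hab
  by_contra hcon
  push Not at hcon
  -- every point off the line `ab` has a partner on its line through `a`
  have hex : ∀ c : ℝ × ℝ, ∃ d : ℝ × ℝ, c ∈ V \ {a, b} →
      d ∈ V \ {a, b} ∧ d ≠ c ∧ Collinear ℝ ({a, c, d} : Set (ℝ × ℝ)) := by
    intro c
    by_cases hc : c ∈ V \ {a, b}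
    · obtain ⟨hcV, hcn⟩ := hc
      have hca : c ≠ a := fun h => hcn (by simp [h])
      have hcb : c ≠ b := fun h => hcn (by simp [h])
      have h1 := (hcon c hcV hca hcb).1
      have h2 : ∃ d ∈ V, Collinear ℝ ({a, c, d} : Set (ℝ × ℝ)) ∧ d ≠ a ∧ d ≠ c := by
        by_contra h
        push Not at h
        refine h1 ⟨ha, hcV, hca.symm, fun d hd hcol => ?_⟩
        by_cases hda : d = a
        · exact Or.inl hda
        · exact Or.inr (h d hd hcol hda)
      obtain ⟨d, hd, hcol, hda, hdc⟩ := h2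
      refine ⟨d, fun _ => ⟨⟨hd, ?_⟩, hdc, hcol⟩⟩
      rintro (h | h)
      · exact hda h
      · have h : d = b := h
        subst h
        have hcol' : Collinear ℝ ({a, d, c} : Set (ℝ × ℝ)) := by
          rwa [Set.pair_comm d c]
        rcases hs c hcV hcol' with h | h
        · exact hca h
        · exact hcb h
    · exact ⟨c, fun h => absurd h hc⟩
  choose g hg using hex
  -- the partner map is an involution, by 3-boundedness
  have hinv : ∀ c ∈ V \ {a, b}, g (g c) = c := by
    intro c hc
    obtain ⟨hd, hdc, hcol⟩ := hg c hc
    obtain ⟨he, hed, hcol2⟩ := hg (g c) hd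
    by_contra hec
    have hda : g c ≠ a := fun h => hd.2 (by simp [h])
    have hea : g (g c) ≠ a := fun h => he.2 (by simp [h])
    have hca : c ≠ a := fun h => hc.2 (by simp [h])
    have hb3 := hbd a ha (g c) hd.1 hda.symm
    have hsub : ((({a, c, g c, g (g c)} : Finset (ℝ × ℝ)) : Set (ℝ × ℝ))) ⊆
        {x ∈ V | Collinear ℝ ({a, g c, x} : Set (ℝ × ℝ))} := by
      intro x hx
      simp only [Finset.coe_insert, Finset.coe_singleton, Set.mem_insert_iff,
        Set.mem_singleton_iff] at hx
      rcases hx with rfl | rfl | rfl | rfl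
      · refine ⟨ha, ?_⟩
        have : ({x, g c, x} : Set (ℝ × ℝ)) = {x, g c} := by ext y; simp; tauto
        rw [this]; exact collinear_pair ℝ _ _
      · refine ⟨hc.1, ?_⟩
        rwa [Set.pair_comm (g x) x]
      · refine ⟨hd.1, ?_⟩
        rw [Set.pair_eq_singleton]; exact collinear_pair ℝ _ _
      · exact ⟨he.1, hcol2⟩
    have h4 := Set.ncard_le_ncard hsub (hfin.subset (Set.sep_subset _ _))
    rw [Set.ncard_coe_finset] at h4
    have hcard : ({a, c, g c, g (g c)} : Finset (ℝ × ℝ)).card = 4 := by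
      rw [Finset.card_insert_of_notMem, Finset.card_insert_of_notMem,
        Finset.card_insert_of_notMem, Finset.card_singleton]
      · simpa using hed.symm
      · simp only [Finset.mem_insert, Finset.mem_singleton, not_or]
        exact ⟨hdc.symm, fun h => hec h.symm⟩
      · simp only [Finset.mem_insert, Finset.mem_singleton, not_or]
        exact ⟨hca.symm, hda.symm, hea.symm⟩
    omega
  have hfin' : (V \ {a, b}).Finite := hfin.diff
  have hsum : ∑ _x ∈ hfin'.toFinset, (1 : ZMod 2) = 0 := by
    refine Finset.sum_involution (fun c _ => g c) ?_ ?_ ?_ ?_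
    · intro c _; decide
    · intro c hc _
      exact (hg c (hfin'.mem_toFinset.1 hc)).2.1
    · intro c hc
      exact hfin'.mem_toFinset.2 (hg c (hfin'.mem_toFinset.1 hc)).1
    · intro c hc
      exact hinv c (hfin'.mem_toFinset.1 hc)
  have heven : Even (V \ {a, b}).ncard := by
    rw [Set.ncard_eq_toFinset_card _ hfin', ← ZMod.natCast_eq_zero_iff_even]
    simpa using hsum
  have hsubV : ({a, b} : Set (ℝ × ℝ)) ⊆ V := by
    rintro x (rfl | rfl)
    · exact ha
    · exact hb
  have hc := Set.ncard_diff_add_ncard_of_subset hsubV hfin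
  rw [Set.ncard_pair hne] at hc
  rw [← hc] at hodd
  exact (Nat.not_odd_iff_even.2 (heven.add even_two)) hodd
end

section
/- Let V = {(-2,0), (2,0), (-1,2), (1,2), (0,4), (0,4/3)} ⊆ ℝ². Then V is a set of 6 points, not all contained in a single line, V is 3-bounded, and V contains no simple wedge: there do not exist three distinct points a, b, c ∈ V such that L_{a,b} and L_{a,c} are both simple lines of V. -/
lemma collinear_iff_cross {a b c : ℝ × ℝ} (hab : a ≠ b) :
    Collinear ℝ ({a, b, c} : Set (ℝ × ℝ)) ↔
      (b.1 - a.1) * (c.2 - a.2) = (b.2 - a.2) * (c.1 - a.1) := by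
  rw [collinear_iff_of_mem (p₀ := a) (by simp)]
  constructor
  · rintro ⟨v, h⟩
    obtain ⟨s, hs⟩ := h b (by simp)
    obtain ⟨t, ht⟩ := h c (by simp)
    subst hs ht
    simp
    ring
  · intro h
    refine ⟨b - a, ?_⟩
    intro p hp
    simp only [Set.mem_insert_iff, Set.mem_singleton_iff] at hp
    rcases hp with rfl | rfl | rfl
    · exact ⟨0, by simp⟩
    · exact ⟨1, by simp⟩
    · by_cases h1 : b.1 - a.1 = 0
      · have h2 : b.2 - a.2 ≠ 0 := by
          intro h2
          exact hab (Prod.ext (by linarith) (by linarith))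
        refine ⟨(p.2 - a.2) / (b.2 - a.2), Prod.ext ?_ ?_⟩
        · have : p.1 - a.1 = 0 := by
            rw [h1, zero_mul] at h
            rcases mul_eq_zero.mp h.symm with h | h
            · exact absurd h h2
            · exact h
          simp [h1]; linarith
        · simp; field_simp; ring
      · refine ⟨(p.1 - a.1) / (b.1 - a.1), Prod.ext ?_ ?_⟩
        · simp; field_simp; ring
        · simp; field_simp; linarith

def sixPts : Set (ℝ × ℝ) := {(-2, 0), (2, 0), (-1, 2), (1, 2), (0, 4), (0, 4/3)}

lemma mem_sixPts {a : ℝ × ℝ} : a ∈ sixPts ↔ a = (-2, 0) ∨ a = (2, 0) ∨ a = (-1, 2) ∨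
    a = (1, 2) ∨ a = (0, 4) ∨ a = (0, 4/3) := by
  simp [sixPts]

lemma forall_sixPts {P : ℝ × ℝ → Prop} : (∀ c ∈ sixPts, P c) ↔
    P (-2, 0) ∧ P (2, 0) ∧ P (-1, 2) ∧ P (1, 2) ∧ P (0, 4) ∧ P (0, 4/3) := by
  simp [sixPts]

lemma ncard_le_three_of {S : Set (ℝ × ℝ)} (a b x : ℝ × ℝ)
    (h : ∀ c ∈ S, c = a ∨ c = b ∨ c = x) : S.ncard ≤ 3 := by
  have hs : S ⊆ {a, b, x} := fun c hc => by simpa using h c hc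
  refine (Set.ncard_le_ncard hs (by simp)).trans ?_
  refine (Set.ncard_insert_le _ _).trans ?_
  have := Set.ncard_insert_le b {x}
  simp at this
  omega

lemma sixPts_third : ∀ a ∈ sixPts, ∀ b ∈ sixPts, a ≠ b → ∃ x, ∀ c ∈ sixPts,
    (b.1 - a.1) * (c.2 - a.2) = (b.2 - a.2) * (c.1 - a.1) → c = a ∨ c = b ∨ c = x := by
  intro a ha b hb hab
  rw [mem_sixPts] at ha hb
  simp only [forall_sixPts]
  rcases ha with rfl | rfl | rfl | rfl | rfl | rfl <;>
  rcases hb with rfl | rfl | rfl | rfl | rfl | rfl <;>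
  first
  | exact absurd rfl hab
  | (refine ⟨(-2, 0), ?_⟩; norm_num; done)
  | (refine ⟨(2, 0), ?_⟩; norm_num; done)
  | (refine ⟨(-1, 2), ?_⟩; norm_num; done)
  | (refine ⟨(1, 2), ?_⟩; norm_num; done)
  | (refine ⟨(0, 4), ?_⟩; norm_num; done)
  | (refine ⟨(0, 4/3), ?_⟩; norm_num; done)

lemma sixPts_threeBounded : ThreeBounded sixPts := by
  intro a ha b hb hab
  obtain ⟨x, hx⟩ := sixPts_third a ha b hb hab
  refine ncard_le_three_of a b x ?_
  rintro c ⟨hc, h⟩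
  exact hx c hc ((collinear_iff_cross hab).mp h)

lemma sixPts_simple {a b : ℝ × ℝ} (h : SimpleLine sixPts a b) :
    (a = (-2, 0) ∧ b = (2, 0)) ∨ (a = (2, 0) ∧ b = (-2, 0)) ∨
    (a = (-1, 2) ∧ b = (1, 2)) ∨ (a = (1, 2) ∧ b = (-1, 2)) ∨
    (a = (0, 4) ∧ b = (0, 4/3)) ∨ (a = (0, 4/3) ∧ b = (0, 4)) := by
  obtain ⟨ha, hb, hab, h⟩ := h
  simp only [collinear_iff_cross hab] at h
  rw [forall_sixPts] at h
  rw [mem_sixPts] at ha hb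
  rcases ha with rfl | rfl | rfl | rfl | rfl | rfl <;>
  rcases hb with rfl | rfl | rfl | rfl | rfl | rfl <;>
  first
  | exact absurd rfl hab
  | (exfalso; norm_num at h; done)
  | norm_num

/-- The explicit `3`-bounded set of `6` non-collinear points
`{(-2,0), (2,0), (-1,2), (1,2), (0,4), (0,4/3)}` contains no simple wedge. -/
theorem six_points_no_simple_wedge :
    let V : Set (ℝ × ℝ) := {(-2, 0), (2, 0), (-1, 2), (1, 2), (0, 4), (0, 4/3)}
    V.ncard = 6 ∧ ¬ Collinear ℝ V ∧ ThreeBounded V ∧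
      ¬ ∃ a ∈ V, ∃ b ∈ V, ∃ c ∈ V, a ≠ b ∧ a ≠ c ∧ b ≠ c ∧
          SimpleLine V a b ∧ SimpleLine V a c := by
  intro V
  refine ⟨?_, ?_, sixPts_threeBounded, ?_⟩
  · have h : V = ((({(-2, 0), (2, 0), (-1, 2), (1, 2), (0, 4), (0, 4/3)} :
        Finset (ℝ × ℝ))) : Set (ℝ × ℝ)) := by
      simp [V]
    rw [h, Set.ncard_coe_finset]
    repeat rw [Finset.card_insert_of_notMem (by norm_num)]
    simp
  · intro h
    have h2 : Collinear ℝ ({(-2, 0), (2, 0), (0, 4)} : Set (ℝ × ℝ)) :=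
      h.subset (by
        intro x hx
        simp only [Set.mem_insert_iff, Set.mem_singleton_iff] at hx
        rcases hx with rfl | rfl | rfl <;> simp [V])
    rw [collinear_iff_cross (by norm_num)] at h2
    norm_num at h2
  · rintro ⟨a, -, b, -, c, -, -, -, hbc, h1, h2⟩
    have e1 := sixPts_simple h1
    have e2 := sixPts_simple h2
    rcases e1 with ⟨rfl, rfl⟩ | ⟨rfl, rfl⟩ | ⟨rfl, rfl⟩ | ⟨rfl, rfl⟩ | ⟨rfl, rfl⟩ | ⟨rfl, rfl⟩ <;>
    rcases e2 with ⟨e, rfl⟩ | ⟨e, rfl⟩ | ⟨e, rfl⟩ | ⟨e, rfl⟩ | ⟨e, rfl⟩ | ⟨e, rfl⟩ <;>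
    first | exact hbc rfl | (norm_num at e; done)
end

section
/- Let V be a finite set of points in the real plane ℝ², not all contained in a single line, with |V| ∈ {3, 4, 5}. Then V contains a simple wedge: there exist three distinct points a, b, c ∈ V such that L_{a,b} and L_{a,c} are both simple lines of V. -/
theorem col_of_line {p q x y z : ℝ × ℝ} (h : p ≠ q)
    (hx : Collinear ℝ ({p, q, x} : Set (ℝ × ℝ))) (hy : Collinear ℝ ({p, q, y} : Set (ℝ × ℝ)))
    (hz : Collinear ℝ ({p, q, z} : Set (ℝ × ℝ))) : Collinear ℝ ({x, y, z} : Set (ℝ × ℝ)) := by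
  have key : ∀ w : ℝ × ℝ, Collinear ℝ ({p, q, w} : Set (ℝ × ℝ)) →
      w ∈ affineSpan ℝ ({p, q} : Set (ℝ × ℝ)) := fun w hw =>
    hw.mem_affineSpan_of_mem_of_ne (by simp) (by simp) (by simp) h
  exact collinear_triple_of_mem_affineSpan_pair (key x hx) (key y hy) (key z hz)

theorem col_left (p q : ℝ × ℝ) : Collinear ℝ ({p, q, p} : Set (ℝ × ℝ)) := by
  have : ({p, q, p} : Set (ℝ × ℝ)) = {p, q} := by ext; simp; tauto
  rw [this]; exact collinear_pair ℝ p q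

theorem col_right (p q : ℝ × ℝ) : Collinear ℝ ({p, q, q} : Set (ℝ × ℝ)) := by
  have : ({p, q, q} : Set (ℝ × ℝ)) = {p, q} := by ext; simp
  rw [this]; exact collinear_pair ℝ p q

/-- Every non-collinear configuration of `3`, `4` or `5`
points in the plane has a simple wedge. -/
theorem small_sets_have_simple_wedge (V : Set (ℝ × ℝ)) (hfin : V.Finite)
    (hline : ¬ Collinear ℝ V)
    (hcard : V.ncard = 3 ∨ V.ncard = 4 ∨ V.ncard = 5) :
    ∃ a ∈ V, ∃ b ∈ V, ∃ c ∈ V, a ≠ b ∧ a ≠ c ∧ b ≠ c ∧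
      SimpleLine V a b ∧ SimpleLine V a c := by
  by_cases htri : ∃ a ∈ V, ∃ b ∈ V, ∃ c ∈ V, a ≠ b ∧ a ≠ c ∧ b ≠ c ∧
      Collinear ℝ ({a, b, c} : Set (ℝ × ℝ))
  · obtain ⟨a, ha, b, hb, c, hc, hab, hac, hbc, habc⟩ := htri
    obtain ⟨d, hd, hdn⟩ : ∃ d ∈ V, ¬ Collinear ℝ ({a, b, d} : Set (ℝ × ℝ)) := by
      by_contra! hall
      apply hline
      have hsub : V ⊆ (affineSpan ℝ ({a, b} : Set (ℝ × ℝ)) : Set (ℝ × ℝ)) := fun w hw =>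
        (hall w hw).mem_affineSpan_of_mem_of_ne (by simp) (by simp) (by simp) hab
      have hcs : Collinear ℝ (affineSpan ℝ ({a, b} : Set (ℝ × ℝ)) : Set (ℝ × ℝ)) := by
        have h := collinear_pair ℝ a b
        unfold Collinear at h ⊢
        rw [← AffineSubspace.direction_eq_vectorSpan, direction_affineSpan]
        exact h
      exact hcs.subset hsub
    -- membership in the line through `a` and `b`
    have hL : ∀ x ∈ ({a, b, c} : Set (ℝ × ℝ)), Collinear ℝ ({a, b, x} : Set (ℝ × ℝ)) := by
      rintro x (rfl | rfl | rfl)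
      · exact col_left _ _
      · exact col_right _ _
      · exact habc
    have hLV : ∀ x ∈ ({a, b, c} : Set (ℝ × ℝ)), x ∈ V := by
      rintro x (rfl | rfl | rfl) <;> assumption
    have hdL : d ∉ ({a, b, c} : Set (ℝ × ℝ)) := fun h => hdn (hL d h)
    -- two distinct points of the line together with `d` are not collinear
    have hnc : ∀ x ∈ ({a, b, c} : Set (ℝ × ℝ)), ∀ y ∈ ({a, b, c} : Set (ℝ × ℝ)), x ≠ y →
        ¬ Collinear ℝ ({x, y, d} : Set (ℝ × ℝ)) := by
      intro x hx y hy hxy hcol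
      exact hdn (col_of_line hxy
        (col_of_line hab (hL x hx) (hL y hy) (col_left a b))
        (col_of_line hab (hL x hx) (hL y hy) (col_right a b)) hcol)
    -- the remaining points
    have huniq : ∀ x ∈ V, x ∉ ({a, b, c} : Set (ℝ × ℝ)) → x ≠ d →
        ∀ y ∈ V, y ∉ ({a, b, c} : Set (ℝ × ℝ)) → y ≠ d → x = y := by
      intro x hx hx1 hx2 y hy hy1 hy2
      by_contra hxy
      simp only [Set.mem_insert_iff, Set.mem_singleton_iff, not_or] at hx1 hy1 hdL
      have hs : (({a, b, c, d, x, y} : Finset (ℝ × ℝ)) : Set (ℝ × ℝ)) ⊆ V := by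
        intro w hw
        simp only [Finset.coe_insert, Finset.coe_singleton, Set.mem_insert_iff,
          Set.mem_singleton_iff] at hw
        rcases hw with rfl | rfl | rfl | rfl | rfl | rfl <;> assumption
      have h1 := Set.ncard_le_ncard hs hfin
      rw [Set.ncard_coe_finset] at h1
      have h2 : ({a, b, c, d, x, y} : Finset (ℝ × ℝ)).card = 6 := by
        repeat rw [Finset.card_insert_of_notMem (by
          simp only [Finset.mem_insert, Finset.mem_singleton, not_or]; grind)]
        simp
      omega
    have hbad : ∀ x ∈ ({a, b, c} : Set (ℝ × ℝ)), ¬ SimpleLine V d x →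
        ∃ y ∈ V, y ∉ ({a, b, c} : Set (ℝ × ℝ)) ∧ y ≠ d ∧
          Collinear ℝ ({d, x, y} : Set (ℝ × ℝ)) := by
      intro x hx hns
      have hdx : d ≠ x := fun h => hdL (h ▸ hx)
      by_contra! hno
      refine hns ⟨hd, hLV x hx, hdx, fun y hy hcol => ?_⟩
      by_contra! hy2
      refine hno y hy (fun hyL => ?_) hy2.1 hcol
      exact hnc x hx y hyL hy2.2.symm
        (col_of_line hdx (col_right d x) hcol (col_left d x))
    have hpair : ∀ x ∈ ({a, b, c} : Set (ℝ × ℝ)), ∀ y ∈ ({a, b, c} : Set (ℝ × ℝ)), x ≠ y →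
        SimpleLine V d x ∨ SimpleLine V d y := by
      intro x hx y hy hxy
      by_contra! hns
      obtain ⟨e, he, heL, hed, hec⟩ := hbad x hx hns.1
      obtain ⟨f, hf, hfL, hfd, hfc⟩ := hbad y hy hns.2
      obtain rfl := huniq e he heL hed f hf hfL hfd
      rw [show ({d, x, e} : Set (ℝ × ℝ)) = {d, e, x} by ext; simp; tauto] at hec
      rw [show ({d, y, e} : Set (ℝ × ℝ)) = {d, e, y} by ext; simp; tauto] at hfc
      exact hnc x hx y hy hxy (col_of_line hed.symm hec hfc (col_left d e))
    have hfin2 : ∀ x ∈ ({a, b, c} : Set (ℝ × ℝ)), ∀ y ∈ ({a, b, c} : Set (ℝ × ℝ)), x ≠ y →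
        SimpleLine V d x → SimpleLine V d y →
        ∃ a ∈ V, ∃ b ∈ V, ∃ c ∈ V, a ≠ b ∧ a ≠ c ∧ b ≠ c ∧
          SimpleLine V a b ∧ SimpleLine V a c := fun x _ y _ hxy h1 h2 =>
      ⟨d, hd, x, h1.2.1, y, h2.2.1, h1.2.2.1, h2.2.2.1, hxy, h1, h2⟩
    have ma : a ∈ ({a, b, c} : Set (ℝ × ℝ)) := by simp
    have mb : b ∈ ({a, b, c} : Set (ℝ × ℝ)) := by simp
    have mc : c ∈ ({a, b, c} : Set (ℝ × ℝ)) := by simp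
    rcases hpair a ma b mb hab with h1 | h1
    · rcases hpair b mb c mc hbc with h2 | h2
      · exact hfin2 a ma b mb hab h1 h2
      · exact hfin2 a ma c mc hac h1 h2
    · rcases hpair a ma c mc hac with h2 | h2
      · exact hfin2 a ma b mb hab h2 h1
      · exact hfin2 b mb c mc hbc h1 h2
  · push Not at htri
    have hs : ∀ x ∈ V, ∀ y ∈ V, x ≠ y → SimpleLine V x y := by
      intro x hx y hy hxy
      refine ⟨hx, hy, hxy, fun z hz hcol => ?_⟩
      by_contra! hz2
      exact htri x hx y hy z hz hxy hz2.1.symm hz2.2.symm hcol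
    obtain ⟨a, b, c, ha, hb, hc, hab, hac, hbc⟩ :=
      (Set.two_lt_ncard_iff hfin).1 (by omega : 2 < V.ncard)
    exact ⟨a, ha, b, hb, c, hc, hab, hac, hbc, hs a ha b hb hab, hs a ha c hc hac⟩
end

section
/- For every even natural number n > 2, there exists a finite 3-bounded set V of points in the real plane ℝ², not all contained in a single line, a simple line L_{a,b} of V, and a closed orbit for L_{a,b} of length n. -/
/-- The point of the conic `u² + 3v² - 4v + 1 = 0` with angle `θ`. -/
noncomputable def conicPt (θ : ℝ) : ℝ × ℝ :=
  (Real.cos θ / (Real.sin θ + 2), 1 / (Real.sin θ + 2))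

lemma sin_add_two_pos (θ : ℝ) : 0 < Real.sin θ + 2 := by
  linarith [Real.neg_one_le_sin θ]

/-- The conic. -/
def OnConic (p : ℝ × ℝ) : Prop := p.1 ^ 2 + 3 * p.2 ^ 2 - 4 * p.2 + 1 = 0

lemma conicPt_onConic (θ : ℝ) : OnConic (conicPt θ) := by
  have h := sin_add_two_pos θ
  have h' := Real.sin_sq_add_cos_sq θ
  unfold OnConic conicPt
  field_simp
  nlinarith

lemma OnConic.ne_zero {p : ℝ × ℝ} (h : OnConic p) : p.2 ≠ 0 := by
  intro h0
  unfold OnConic at h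
  rw [h0] at h
  nlinarith [sq_nonneg p.1]

lemma collinear_param {p q c : ℝ × ℝ} (hpq : p ≠ q)
    (h : Collinear ℝ ({p, q, c} : Set (ℝ × ℝ))) :
    ∃ s : ℝ, c.1 = p.1 + s * (q.1 - p.1) ∧ c.2 = p.2 + s * (q.2 - p.2) := by
  rw [collinear_iff_of_mem (p₀ := p) (by simp)] at h
  obtain ⟨v, hv⟩ := h
  obtain ⟨r, hr⟩ := hv q (by simp)
  obtain ⟨r', hr'⟩ := hv c (by simp)
  have hr0 : r ≠ 0 := by
    rintro rfl
    apply hpq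
    simp [hr]
  refine ⟨r' / r, ?_, ?_⟩
  · rw [hr', hr]
    simp
    field_simp
    ring
  · rw [hr', hr]
    simp
    field_simp
    ring

lemma collinear_conic (h θ φ : ℝ) (hc : Real.cos h ≠ 0) (hs : θ + φ = -2 * h) :
    Collinear ℝ ({(Real.tan h, 0), conicPt θ, conicPt φ} : Set (ℝ × ℝ)) := by
  rw [collinear_iff_of_mem (p₀ := (Real.tan h, 0)) (by simp)]
  have key : ∀ α : ℝ, conicPt α =
      (1 / (Real.sin α + 2)) • ((Real.cos (α + h) / Real.cos h - 2 * Real.tan h, 1) : ℝ × ℝ)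
        +ᵥ ((Real.tan h, 0) : ℝ × ℝ) := by
    intro α
    have := sin_add_two_pos α
    rw [Real.cos_add, Real.tan_eq_sin_div_cos]
    ext
    · simp [conicPt]
      field_simp
      ring
    · simp [conicPt]
  refine ⟨(Real.cos (θ + h) / Real.cos h - 2 * Real.tan h, 1), ?_⟩
  intro p hp
  simp only [Set.mem_insert_iff, Set.mem_singleton_iff] at hp
  rcases hp with rfl | rfl | rfl
  · exact ⟨0, by simp⟩
  · exact ⟨_, key θ⟩
  · have e : Real.cos (θ + h) = Real.cos (φ + h) := by
      rw [← Real.cos_neg]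
      congr 1
      linarith
    rw [e]
    exact ⟨_, key φ⟩

lemma ncard_triple_le {S : Set (ℝ × ℝ)} (p q r : ℝ × ℝ) (h : S ⊆ {p, q, r}) : S.ncard ≤ 3 := by
  refine (Set.ncard_le_ncard h (by simp)).trans ?_
  refine (Set.ncard_insert_le _ _).trans ?_
  have := Set.ncard_insert_le q {r}
  rw [Set.ncard_singleton] at this
  omega

lemma conic_axis_bound {V : Set (ℝ × ℝ)} (hV : ∀ p ∈ V, p.2 = 0 ∨ OnConic p)
    {p q : ℝ × ℝ} (hp : OnConic p) (hq : q.2 = 0) :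
    ({c ∈ V | Collinear ℝ ({p, q, c} : Set (ℝ × ℝ))}).ncard ≤ 3 := by
  have hpq : p ≠ q := by
    rintro rfl
    exact hp.ne_zero hq
  have hp0 := hp.ne_zero
  let A := (q.1 - p.1) ^ 2 + 3 * (q.2 - p.2) ^ 2
  let B := 2 * p.1 * (q.1 - p.1) + 6 * p.2 * (q.2 - p.2) - 4 * (q.2 - p.2)
  have hA : A ≠ 0 := by
    have : 0 < p.2 ^ 2 := by positivity
    have : 0 < A := by
      simp only [A, hq]
      nlinarith [sq_nonneg (q.1 - p.1)]
    exact this.ne'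
  apply ncard_triple_le p q (p.1 + (-B / A) * (q.1 - p.1), p.2 + (-B / A) * (q.2 - p.2))
  rintro c ⟨hc, hcol⟩
  obtain ⟨s, h1, h2⟩ := collinear_param hpq hcol
  simp only [Set.mem_insert_iff, Set.mem_singleton_iff]
  rcases hV c hc with h | h
  · right; left
    have : s = 1 := by
      rw [h, hq] at h2
      have : p.2 * (s - 1) = 0 := by linarith
      rcases mul_eq_zero.1 this with h | h
      · exact absurd h hp0
      · linarith
    subst this
    ext <;> linarith
  · have e : s * (A * s + B) = 0 := by
      unfold OnConic at h hp
      rw [h1, h2] at h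
      simp only [A, B]
      linear_combination h - hp
    rcases mul_eq_zero.1 e with h | h
    · left
      subst h
      ext <;> linarith
    · right; right
      have : s = -B / A := by
        rw [eq_div_iff hA]
        linarith
      rw [← this]
      ext <;> assumption

lemma conic_conic_bound {V : Set (ℝ × ℝ)} (hV : ∀ p ∈ V, p.2 = 0 ∨ OnConic p)
    {p q : ℝ × ℝ} (hp : OnConic p) (hq : OnConic q) (hpq : p ≠ q) :
    ({c ∈ V | Collinear ℝ ({p, q, c} : Set (ℝ × ℝ))}).ncard ≤ 3 := by
  have hp0 := hp.ne_zero
  apply ncard_triple_le p q (p.1 + (-p.2 / (q.2 - p.2)) * (q.1 - p.1),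
    p.2 + (-p.2 / (q.2 - p.2)) * (q.2 - p.2))
  rintro c ⟨hc, hcol⟩
  obtain ⟨s, h1, h2⟩ := collinear_param hpq hcol
  simp only [Set.mem_insert_iff, Set.mem_singleton_iff]
  rcases hV c hc with h | h
  · right; right
    have hd : q.2 - p.2 ≠ 0 := by
      intro hd
      rw [h, hd] at h2
      apply hp0
      linarith
    have : s = -p.2 / (q.2 - p.2) := by
      rw [eq_div_iff hd]
      linarith
    rw [← this]
    ext <;> assumption
  · have e : (s * (s - 1)) * ((q.1 - p.1) ^ 2 + 3 * (q.2 - p.2) ^ 2) = 0 := by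
      unfold OnConic at h hp hq
      rw [h1, h2] at h
      linear_combination h - s * hq - (1 - s) * hp
    rcases mul_eq_zero.1 e with h | h
    · rcases mul_eq_zero.1 h with h | h
      · left
        subst h
        ext <;> linarith
      · right; left
        have : s = 1 := by linarith
        subst this
        ext <;> linarith
    · exfalso
      apply hpq
      have e1 : (q.1 - p.1) ^ 2 = 0 := by nlinarith [sq_nonneg (q.1 - p.1), sq_nonneg (q.2 - p.2)]
      have e2 : (q.2 - p.2) ^ 2 = 0 := by nlinarith [sq_nonneg (q.1 - p.1), sq_nonneg (q.2 - p.2)]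
      have e1 := pow_eq_zero_iff (two_ne_zero) |>.1 e1
      have e2 := pow_eq_zero_iff (two_ne_zero) |>.1 e2
      ext <;> linarith

lemma conicPt_inj {θ φ : ℝ} (h : conicPt θ = conicPt φ) :
    ∃ k : ℤ, θ - φ = 2 * Real.pi * k := by
  have h1 := sin_add_two_pos θ
  have h2 := sin_add_two_pos φ
  simp only [conicPt, Prod.mk.injEq] at h
  obtain ⟨hu, hv⟩ := h
  have hs : Real.sin θ = Real.sin φ := by
    field_simp at hv
    linarith
  have hc : Real.cos θ = Real.cos φ := by
    rw [hs] at hu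
    field_simp at hu
    exact hu
  exact Real.Angle.angle_eq_iff_two_pi_dvd_sub.1 (Real.Angle.cos_sin_inj hc hs)

/-- The angles of the orbit. -/
noncomputable def orbAngle (n k : ℕ) : ℝ := (-1) ^ k * (2 * (Real.pi / n) * k)

lemma orb_inj {n i j : ℕ} (hn : Even n) (h2 : 2 < n) (hi : i < n) (hj : j < n)
    (h : conicPt (orbAngle n i) = conicPt (orbAngle n j)) : i = j := by
  obtain ⟨k, hk⟩ := conicPt_inj h
  have hn0 : (n : ℝ) ≠ 0 := by positivity
  have hpi := Real.pi_ne_zero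
  have e : ((-1) ^ i * i - (-1) ^ j * j : ℤ) = n * k := by
    have : ((-1) ^ i * i - (-1) ^ j * j : ℝ) = n * k := by
      unfold orbAngle at hk
      field_simp at hk
      linarith
    exact_mod_cast this
  have small : ∀ l : ℤ, (n : ℤ) * l < n → -(n : ℤ) < n * l → l = 0 := by
    intro l h1 h2
    have : l < 1 := by nlinarith
    have : -1 < l := by nlinarith
    omega
  obtain ⟨m, rfl⟩ := hn
  have ek : (((m + m : ℕ) : ℤ) * k) = 2 * (m * k) := by push_cast; ring
  rcases Nat.even_or_odd i with hi' | hi' <;> rcases Nat.even_or_odd j with hj' | hj'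
  · rw [hi'.neg_one_pow, hj'.neg_one_pow] at e
    have := small k (by omega) (by omega)
    subst this
    omega
  · rw [hi'.neg_one_pow, hj'.neg_one_pow, ek] at e
    obtain ⟨a, rfl⟩ := hi'
    obtain ⟨b, rfl⟩ := hj'
    omega
  · rw [hi'.neg_one_pow, hj'.neg_one_pow, ek] at e
    obtain ⟨a, rfl⟩ := hi'
    obtain ⟨b, rfl⟩ := hj'
    omega
  · rw [hi'.neg_one_pow, hj'.neg_one_pow] at e
    have := small k (by omega) (by omega)
    subst this
    omega

/-- For every even `n > 2` there is a finite `3`-bounded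
non-collinear set `V`, a simple line `L_{a,b}` of `V`, and a closed orbit for
`L_{a,b}` of length `n` (i.e. with `t - 1 = n`). -/
theorem closed_orbit_of_every_even_length (n : ℕ) (hn : Even n) (h2 : 2 < n) :
    ∃ V : Set (ℝ × ℝ), V.Finite ∧ ThreeBounded V ∧ ¬ Collinear ℝ V ∧
      ∃ a b, SimpleLine V a b ∧ ∃ t x, ClosedOrbit V a b t x ∧ t - 1 = n := by
  have hn0 : (0 : ℝ) < n := by positivity
  have hpi := Real.pi_pos
  obtain ⟨h, hh⟩ : ∃ h : ℝ, h = Real.pi / n := ⟨_, rfl⟩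
  have hpos : 0 < h := by rw [hh]; positivity
  have hlt : h < Real.pi / 2 := by
    rw [hh]
    apply div_lt_div_of_pos_left hpi (by norm_num)
    exact_mod_cast h2
  have hcos : Real.cos h ≠ 0 := (Real.cos_pos_of_mem_Ioo ⟨by linarith, hlt⟩).ne'
  have htan : 0 < Real.tan h := Real.tan_pos_of_pos_of_lt_pi_div_two hpos hlt
  obtain ⟨a, ha⟩ : ∃ a : ℝ × ℝ, a = (Real.tan (-h), 0) := ⟨_, rfl⟩
  obtain ⟨b, hb⟩ : ∃ b : ℝ × ℝ, b = (Real.tan h, 0) := ⟨_, rfl⟩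
  have ha2 : a.2 = 0 := by rw [ha]
  have hb2 : b.2 = 0 := by rw [hb]
  have hab : a ≠ b := by
    intro e
    have : a.1 = b.1 := by rw [e]
    rw [ha, hb] at this
    simp only [Real.tan_neg] at this
    linarith
  obtain ⟨x, hx⟩ : ∃ x : ℕ → ℝ × ℝ, x = fun k => conicPt (orbAngle n k) := ⟨_, rfl⟩
  have hxc : ∀ k, OnConic (x k) := fun k => by rw [hx]; exact conicPt_onConic _
  have hxa : ∀ k, x k ≠ a := fun k e => (hxc k).ne_zero (by rw [e, ha2])
  have hxb : ∀ k, x k ≠ b := fun k e => (hxc k).ne_zero (by rw [e, hb2])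
  obtain ⟨V, hVd⟩ : ∃ V : Set (ℝ × ℝ), V = {a, b} ∪ x '' Set.Iio (n + 1) := ⟨_, rfl⟩
  have hcase : ∀ p ∈ V, (p = a ∨ p = b) ∨ OnConic p := by
    intro p hp
    rw [hVd] at hp
    rcases hp with hp | ⟨k, -, rfl⟩
    · left
      simpa using hp
    · right
      exact hxc k
  have hV : ∀ p ∈ V, p.2 = 0 ∨ OnConic p := by
    intro p hp
    rcases hcase p hp with (rfl | rfl) | h
    · exact Or.inl ha2
    · exact Or.inl hb2
    · exact Or.inr h
  have hxV : ∀ k < n + 1, x k ∈ V := by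
    intro k hk
    rw [hVd]
    exact Or.inr ⟨k, hk, rfl⟩
  have haV : a ∈ V := by rw [hVd]; simp
  have hbV : b ∈ V := by rw [hVd]; simp
  have hsimple : SimpleLine V a b := by
    refine ⟨haV, hbV, hab, ?_⟩
    intro c hc hcol
    obtain ⟨s, -, e⟩ := collinear_param hab hcol
    rcases hcase c hc with h | h
    · exact h
    · exact absurd (by rw [e, ha2, hb2]; ring) h.ne_zero
  refine ⟨V, ?_, ?_, ?_, a, b, hsimple, n + 1, x, ⟨⟨by omega, ?_, ?_, ?_⟩, by omega, ?_⟩, by omega⟩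
  · rw [hVd]
    exact (by simp : ({a, b} : Set (ℝ × ℝ)).Finite).union ((Set.finite_Iio _).image _)
  · intro p hp q hq hpq
    rcases hV p hp with hp' | hp' <;> rcases hV q hq with hq' | hq'
    · apply ncard_triple_le a b b
      rintro c ⟨hc, hcol⟩
      obtain ⟨s, -, e⟩ := collinear_param hpq hcol
      rcases hcase c hc with h | h
      · simpa using h
      · exact absurd (by rw [e, hp', hq']; ring) h.ne_zero
    · have := conic_axis_bound hV hq' hp'
      simpa only [Set.insert_comm q p] using this
    · exact conic_axis_bound hV hp' hq'
    · exact conic_conic_bound hV hp' hq' hpq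
  · intro hcol
    have := hsimple.2.2.2 (x 0) (hxV 0 (by omega)) (hcol.subset ?_)
    · rcases this with h | h
      · exact hxa 0 h
      · exact hxb 0 h
    · rintro p (rfl | rfl | rfl)
      · exact haV
      · exact hbV
      · exact hxV 0 (by omega)
  · intro i hi
    exact ⟨hxV i hi, hxa i, hxb i⟩
  · intro i hi j hj hij e
    rw [hx] at e
    exact hij (orb_inj hn h2 (by omega) (by omega) e)
  · intro k hk
    constructor
    · intro hk'
      rw [hb, hx]
      apply collinear_conic h _ _ hcos
      unfold orbAngle
      rw [pow_succ, hk'.neg_one_pow, ← hh]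
      push_cast
      ring
    · intro hk'
      rw [ha, hx]
      apply collinear_conic (-h) _ _ (by rwa [Real.cos_neg])
      unfold orbAngle
      rw [pow_succ, hk'.neg_one_pow, ← hh]
      push_cast
      ring
  · rw [hx]
    have e0 : orbAngle n 0 = 0 := by simp [orbAngle]
    have e1 : orbAngle n (n + 1 - 1) = 2 * Real.pi := by
      simp only [Nat.add_sub_cancel, orbAngle, hn.neg_one_pow]
      field_simp
    simp only [e0, e1, conicPt, Real.cos_two_pi, Real.sin_two_pi, Real.cos_zero, Real.sin_zero]
end

section
/- For every even natural number n > 6, there exists a 3-bounded set V of n points in the real plane ℝ², not all contained in a single line, and a simple line L_{a,b} of V from which no simple wedge can be created: there is no point c ∈ V \ {a,b} such that L_{a,c} or L_{b,c} is a simple line of V. -/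
/-- determinant form of collinearity -/
def CD (p q r : ℝ × ℝ) : Prop :=
  (q.1 - p.1) * (r.2 - p.2) = (r.1 - p.1) * (q.2 - p.2)

lemma col_iff (p q r : ℝ × ℝ) : Collinear ℝ ({p, q, r} : Set (ℝ × ℝ)) ↔ CD p q r := by
  unfold CD
  constructor
  · intro h
    rw [collinear_iff_of_mem (p₀ := p) (by simp)] at h
    obtain ⟨v, hv⟩ := h
    obtain ⟨s, hs⟩ := hv q (by simp)
    obtain ⟨t, ht⟩ := hv r (by simp)
    subst hs ht
    simp
    ring
  · intro h
    by_cases hqp : q = p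
    · subst hqp
      simp [collinear_pair]
    · rw [collinear_iff_of_mem (p₀ := p) (by simp)]
      refine ⟨q - p, ?_⟩
      intro z hz
      simp only [Set.mem_insert_iff, Set.mem_singleton_iff] at hz
      rcases hz with rfl | rfl | rfl
      · exact ⟨0, by simp⟩
      · exact ⟨1, by simp⟩
      · by_cases h1 : q.1 - p.1 = 0
        · have h2 : q.2 - p.2 ≠ 0 := by
            intro h2
            exact hqp (Prod.ext (by linarith) (by linarith))
          refine ⟨(z.2 - p.2) / (q.2 - p.2), Prod.ext ?_ ?_⟩
          · rw [h1, zero_mul] at h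
            have : z.1 - p.1 = 0 := by
              rcases mul_eq_zero.1 h.symm with h | h
              · exact h
              · exact absurd h h2
            simp [h1]
            linarith
          · simp
            field_simp
            ring
        · refine ⟨(z.1 - p.1) / (q.1 - p.1), Prod.ext ?_ ?_⟩
          · simp
            field_simp
            ring
          · simp
            field_simp
            linarith

lemma CD_swap12 (p q r : ℝ × ℝ) : CD p q r ↔ CD q p r := by
  unfold CD; constructor <;> intro h <;> linarith

lemma CD_swap23 (p q r : ℝ × ℝ) : CD p q r ↔ CD p r q := by
  unfold CD; constructor <;> intro h <;> linarith

/-- grid pattern: two cells in each row and each column -/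
def InT (k : ℕ) (p : ℕ × ℕ) : Prop :=
  p.1 < k ∧ (p.2 = p.1 ∨ (p.2 = p.1 + 1 ∧ p.2 < k) ∨ (p.1 + 1 = k ∧ p.2 = 0))

/-- the height of a row -/
noncomputable def ht (k : ℕ) (r : ℕ) : ℝ := (2 * (k : ℝ) + 1) ^ r

lemma ht_pos (k r : ℕ) : 0 < ht k r := by unfold ht; positivity

lemma ht_inj {k r s : ℕ} (hk : 0 < k) (h : ht k r = ht k s) : r = s := by
  unfold ht at h
  have hk' : (0 : ℝ) < k := by exact_mod_cast hk
  exact pow_right_injective₀ (by linarith) (by linarith) h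

/-- projective image of the grid point -/
noncomputable def fp (k : ℕ) (p : ℕ × ℕ) : ℝ × ℝ :=
  ((p.1 : ℝ) / (p.1 + ht k p.2 + 1), ht k p.2 / (p.1 + ht k p.2 + 1))

lemma den_pos (k : ℕ) (p : ℕ × ℕ) : 0 < (p.1 : ℝ) + ht k p.2 + 1 := by
  have := ht_pos k p.2
  positivity

lemma CD_ab (k : ℕ) (p : ℕ × ℕ) : ¬ CD (1, 0) (0, 1) (fp k p) := by
  have := den_pos k p
  unfold CD fp
  simp only
  intro h
  field_simp at h
  linarith

lemma CD_a (k : ℕ) (hk : 0 < k) (p q : ℕ × ℕ) :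
    CD (1, 0) (fp k p) (fp k q) ↔ p.2 = q.2 := by
  have h1 := den_pos k p
  have h2 := den_pos k q
  have : CD (1, 0) (fp k p) (fp k q) ↔ ht k p.2 = ht k q.2 := by
    unfold CD fp
    simp only
    field_simp
    constructor <;> intro h <;> linarith
  rw [this]
  exact ⟨ht_inj hk, fun h => by rw [h]⟩

lemma CD_b (k : ℕ) (p q : ℕ × ℕ) :
    CD (0, 1) (fp k p) (fp k q) ↔ p.1 = q.1 := by
  have h1 := den_pos k p
  have h2 := den_pos k q
  have : CD (0, 1) (fp k p) (fp k q) ↔ (p.1 : ℝ) = q.1 := by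
    unfold CD fp
    simp only
    field_simp
    constructor <;> intro h <;> linarith
  rw [this]
  exact Nat.cast_inj

lemma CD_f (k : ℕ) (p q s : ℕ × ℕ) :
    CD (fp k p) (fp k q) (fp k s) →
      ht k p.2 * ((q.1 : ℝ) - s.1) + ht k q.2 * ((s.1 : ℝ) - p.1)
        + ht k s.2 * ((p.1 : ℝ) - q.1) = 0 := by
  have h1 := den_pos k p
  have h2 := den_pos k q
  have h3 := den_pos k s
  unfold CD fp
  simp only
  generalize ht k p.2 = P at *
  generalize ht k q.2 = Q at *
  generalize ht k s.2 = S at *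
  generalize (p.1 : ℝ) = x at *
  generalize (q.1 : ℝ) = y at *
  generalize (s.1 : ℝ) = z at *
  intro h
  rw [div_sub_div _ _ h2.ne' h1.ne', div_sub_div _ _ h3.ne' h1.ne',
    div_sub_div _ _ h2.ne' h1.ne', div_sub_div _ _ h3.ne' h1.ne', div_mul_div_comm,
    div_mul_div_comm, div_eq_div_iff (by positivity) (by positivity)] at h
  have hA : (y + Q + 1) * (x + P + 1) * ((z + S + 1) * (x + P + 1)) ≠ 0 := by positivity
  have hB : (z + S + 1) * (x + P + 1) * ((y + Q + 1) * (x + P + 1)) =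
    (y + Q + 1) * (x + P + 1) * ((z + S + 1) * (x + P + 1)) := by ring
  rw [hB] at h
  have h := mul_right_cancel₀ hA h
  have h4 : (x + P + 1) * (P * (y - z) + Q * (z - x) + S * (x - y)) = 0 := by linarith
  exact (mul_eq_zero.1 h4).resolve_left h1.ne'

/-- the core: strict top row -/
lemma top_strict (k : ℕ) (p q s : ℕ × ℕ) (hp : p.1 < k) (hq : q.1 < k) (hs : s.1 < k)
    (hps : p.2 < s.2) (hqs : q.2 < s.2)
    (h : ht k p.2 * ((q.1 : ℝ) - s.1) + ht k q.2 * ((s.1 : ℝ) - p.1)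
        + ht k s.2 * ((p.1 : ℝ) - q.1) = 0) : p.1 = q.1 := by
  by_contra hne
  obtain ⟨m, hm⟩ : ∃ m, s.2 = m + 1 := ⟨s.2 - 1, by omega⟩
  have hP : ht k p.2 ≤ ht k m := by
    unfold ht
    exact pow_le_pow_right₀ (by linarith [(Nat.cast_nonneg k : (0 : ℝ) ≤ k)]) (by omega)
  have hQ : ht k q.2 ≤ ht k m := by
    unfold ht
    exact pow_le_pow_right₀ (by linarith [(Nat.cast_nonneg k : (0 : ℝ) ≤ k)]) (by omega)
  have hS : ht k s.2 = ht k m * (2 * k + 1) := by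
    unfold ht; rw [hm, pow_succ]
  have hP0 := ht_pos k p.2
  have hQ0 := ht_pos k q.2
  have hM0 := ht_pos k m
  have hS0 := ht_pos k s.2
  have hxp : (p.1 : ℝ) < k := by exact_mod_cast hp
  have hxq : (q.1 : ℝ) < k := by exact_mod_cast hq
  have hxs : (s.1 : ℝ) < k := by exact_mod_cast hs
  have hp0 : (0 : ℝ) ≤ p.1 := Nat.cast_nonneg _
  have hq0 : (0 : ℝ) ≤ q.1 := Nat.cast_nonneg _
  have hs0 : (0 : ℝ) ≤ s.1 := Nat.cast_nonneg _
  have hk0 : (0 : ℝ) ≤ k := Nat.cast_nonneg _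
  have e1 : |ht k p.2 * ((q.1 : ℝ) - s.1)| ≤ ht k m * k := by
    rw [abs_mul, abs_of_pos hP0]
    exact mul_le_mul hP (abs_le.2 ⟨by linarith, by linarith⟩) (abs_nonneg _) hM0.le
  have e2 : |ht k q.2 * ((s.1 : ℝ) - p.1)| ≤ ht k m * k := by
    rw [abs_mul, abs_of_pos hQ0]
    exact mul_le_mul hQ (abs_le.2 ⟨by linarith, by linarith⟩) (abs_nonneg _) hM0.le
  have e1' := abs_le.1 e1
  have e2' := abs_le.1 e2
  rcases lt_or_gt_of_ne hne with hlt | hlt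
  · have : (p.1 : ℝ) + 1 ≤ q.1 := by exact_mod_cast hlt
    have : ht k s.2 * ((p.1 : ℝ) - q.1) ≤ ht k s.2 * (-1) :=
      mul_le_mul_of_nonneg_left (by linarith) hS0.le
    linarith [e1'.1, e1'.2, e2'.1, e2'.2]
  · have : (q.1 : ℝ) + 1 ≤ p.1 := by exact_mod_cast hlt
    have : ht k s.2 * 1 ≤ ht k s.2 * ((p.1 : ℝ) - q.1) :=
      mul_le_mul_of_nonneg_left (by linarith) hS0.le
    linarith [e1'.1, e1'.2, e2'.1, e2'.2]

lemma InT_col {k : ℕ} {p q s : ℕ × ℕ} (hp : InT k p) (hq : InT k q) (hs : InT k s)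
    (h1 : p.1 = q.1) (h2 : p.1 = s.1) : p = q ∨ p = s ∨ q = s := by
  unfold InT at *
  simp only [Prod.ext_iff]
  omega

lemma InT_row {k : ℕ} {p q s : ℕ × ℕ} (hp : InT k p) (hq : InT k q) (hs : InT k s)
    (h1 : p.2 = q.2) (h2 : p.2 = s.2) : p = q ∨ p = s ∨ q = s := by
  unfold InT at *
  simp only [Prod.ext_iff]
  omega

/-- no three grid points collinear, top row at `s` -/
lemma no_three_top (k : ℕ) (hk : 0 < k) (p q s : ℕ × ℕ) (hp : InT k p) (hq : InT k q)
    (hs : InT k s) (hpq : p ≠ q) (hps : p ≠ s) (hqs : q ≠ s)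
    (h1 : p.2 ≤ s.2) (h2 : q.2 ≤ s.2) : ¬ CD (fp k p) (fp k q) (fp k s) := by
  intro h
  have h := CD_f k p q s h
  rcases h1.lt_or_eq with h1 | h1
  · rcases h2.lt_or_eq with h2 | h2
    · have e := top_strict k p q s hp.1 hq.1 hs.1 h1 h2 h
      have e' : (p.1 : ℝ) = q.1 := by rw [e]
      have h3 : (ht k p.2 - ht k q.2) * ((q.1 : ℝ) - s.1) = 0 := by
        rw [e'] at h; linarith
      rcases mul_eq_zero.1 h3 with h3 | h3
      · exact hpq (Prod.ext e (ht_inj hk (by linarith)))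
      · have h4 : q.1 = s.1 := by
          have : (q.1 : ℝ) = s.1 := by linarith
          exact_mod_cast this
        have := InT_col hp hq hs e (by omega)
        tauto
    · rw [h2] at h
      have h3 : (ht k p.2 - ht k s.2) * ((q.1 : ℝ) - s.1) = 0 := by linarith
      rcases mul_eq_zero.1 h3 with h3 | h3
      · have := ht_inj hk (sub_eq_zero.1 h3)
        omega
      · have h4 : q.1 = s.1 := by
          have : (q.1 : ℝ) = s.1 := by linarith
          exact_mod_cast this
        exact hqs (Prod.ext h4 h2)
  · rw [h1] at h
    have h3 : (ht k q.2 - ht k s.2) * ((s.1 : ℝ) - p.1) = 0 := by linarith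
    rcases mul_eq_zero.1 h3 with h3 | h3
    · have := ht_inj hk (sub_eq_zero.1 h3)
      have := InT_row hp hq hs (by omega) h1
      tauto
    · have h4 : p.1 = s.1 := by
        have : (p.1 : ℝ) = s.1 := by linarith
        exact_mod_cast this
      exact hps (Prod.ext h4 h1)

lemma no_three (k : ℕ) (hk : 0 < k) (p q s : ℕ × ℕ) (hp : InT k p) (hq : InT k q)
    (hs : InT k s) (hpq : p ≠ q) (hps : p ≠ s) (hqs : q ≠ s) :
    ¬ CD (fp k p) (fp k q) (fp k s) := by
  by_cases h1 : p.2 ≤ s.2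
  · by_cases h2 : q.2 ≤ s.2
    · exact no_three_top k hk p q s hp hq hs hpq hps hqs h1 h2
    · rw [CD_swap23]
      exact no_three_top k hk p s q hp hs hq hps hpq hqs.symm (by omega) (by omega)
  · by_cases h2 : q.2 ≤ p.2
    · rw [CD_swap12, CD_swap23]
      exact no_three_top k hk q s p hq hs hp hqs hpq.symm hps.symm (by omega) (by omega)
    · rw [CD_swap23]
      exact no_three_top k hk p s q hp hs hq hps hpq hqs.symm (by omega) (by omega)

/-- the point set -/
def VV (k : ℕ) : Set (ℝ × ℝ) := insert (1, 0) (insert (0, 1) (fp k '' {p | InT k p}))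

lemma VV_cases {k : ℕ} {u : ℝ × ℝ} (h : u ∈ VV k) :
    u = (1, 0) ∨ u = (0, 1) ∨ ∃ p, InT k p ∧ u = fp k p := by
  rcases h with h | h | ⟨p, hp, rfl⟩
  · exact Or.inl h
  · exact Or.inr (Or.inl h)
  · exact Or.inr (Or.inr ⟨p, hp, rfl⟩)

lemma third_unique (k : ℕ) (hk : 0 < k) {u v c d : ℝ × ℝ} (hu : u ∈ VV k) (hv : v ∈ VV k)
    (hc : c ∈ VV k) (hd : d ∈ VV k) (huv : u ≠ v) (huc : u ≠ c) (hvc : v ≠ c)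
    (hud : u ≠ d) (hvd : v ≠ d) (h1 : CD u v c) (h2 : CD u v d) : c = d := by
  have A1 := CD_ab k
  have A2 : ∀ p, ¬ CD (0, 1) (1, 0) (fp k p) := fun p => by rw [CD_swap12]; exact A1 p
  have A3 : ∀ p, ¬ CD (1, 0) (fp k p) (0, 1) := fun p => by rw [CD_swap23]; exact A1 p
  have A4 : ∀ p, ¬ CD (0, 1) (fp k p) (1, 0) := fun p => by rw [CD_swap23]; exact A2 p
  have A5 : ∀ p, ¬ CD (fp k p) (0, 1) (1, 0) := fun p => by rw [CD_swap12]; exact A4 p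
  have A6 : ∀ p, ¬ CD (fp k p) (1, 0) (0, 1) := fun p => by rw [CD_swap12]; exact A3 p
  have B1 := CD_a k hk
  have B2 : ∀ p q, CD (fp k p) (1, 0) (fp k q) ↔ p.2 = q.2 :=
    fun p q => by rw [CD_swap12]; exact B1 p q
  have B3 : ∀ p q, CD (fp k p) (fp k q) (1, 0) ↔ p.2 = q.2 :=
    fun p q => by rw [CD_swap23]; exact B2 p q
  have C1 := CD_b k
  have C2 : ∀ p q, CD (fp k p) (0, 1) (fp k q) ↔ p.1 = q.1 :=
    fun p q => by rw [CD_swap12]; exact C1 p q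
  have C3 : ∀ p q, CD (fp k p) (fp k q) (0, 1) ↔ p.1 = q.1 :=
    fun p q => by rw [CD_swap23]; exact C2 p q
  have N := no_three k hk
  have R : ∀ {p q s : ℕ × ℕ}, InT k p → InT k q → InT k s → fp k p ≠ fp k q → fp k p ≠ fp k s →
      p.2 = q.2 → p.2 = s.2 → q = s := by
    intro p q s hp hq hs n1 n2 e1 e2
    rcases InT_row hp hq hs e1 e2 with h | h | h
    · exact absurd (by rw [h]) n1
    · exact absurd (by rw [h]) n2
    · exact h
  have L : ∀ {p q s : ℕ × ℕ}, InT k p → InT k q → InT k s → fp k p ≠ fp k q → fp k p ≠ fp k s →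
      p.1 = q.1 → p.1 = s.1 → q = s := by
    intro p q s hp hq hs n1 n2 e1 e2
    rcases InT_col hp hq hs e1 e2 with h | h | h
    · exact absurd (by rw [h]) n1
    · exact absurd (by rw [h]) n2
    · exact h
  have N' : ∀ {p q s : ℕ × ℕ}, InT k p → InT k q → InT k s → fp k p ≠ fp k q → fp k p ≠ fp k s →
      fp k q ≠ fp k s → ¬ CD (fp k p) (fp k q) (fp k s) := by
    intro p q s hp hq hs n1 n2 n3
    exact N p q s hp hq hs (fun h => n1 (by rw [h])) (fun h => n2 (by rw [h]))
      (fun h => n3 (by rw [h]))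
  rcases VV_cases hu with rfl | rfl | ⟨p, hp, rfl⟩ <;>
  rcases VV_cases hv with rfl | rfl | ⟨q, hq, rfl⟩ <;>
  first
  | exact absurd rfl huv
  | (rcases VV_cases hc with rfl | rfl | ⟨r, hr, rfl⟩ <;>
     first
     | exact absurd rfl huc
     | exact absurd rfl hvc
     | exact absurd h1 (A1 _)
     | exact absurd h1 (A2 _)
     | exact absurd h1 (A3 _)
     | exact absurd h1 (A4 _)
     | exact absurd h1 (A5 _)
     | exact absurd h1 (A6 _)
     | exact absurd h1 (N' hp hq hr huv huc hvc)
     | (rcases VV_cases hd with rfl | rfl | ⟨s, hs, rfl⟩ <;>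
        first
        | rfl
        | exact absurd rfl hud
        | exact absurd rfl hvd
        | exact absurd h2 (A1 _)
        | exact absurd h2 (A2 _)
        | exact absurd h2 (A3 _)
        | exact absurd h2 (A4 _)
        | exact absurd h2 (A5 _)
        | exact absurd h2 (A6 _)
        | exact absurd h2 (N' hp hq hs huv hud hvd)
        | exact absurd (Prod.ext ((C3 _ _).1 h1) ((B3 _ _).1 h2)) (fun h => huv (by rw [h]))
        | exact absurd (Prod.ext ((C3 _ _).1 h2) ((B3 _ _).1 h1)) (fun h => huv (by rw [h]))
        | exact congrArg _ (R hp hr hs huc hud ((B2 _ _).1 h1) ((B2 _ _).1 h2))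
        | exact congrArg _ (L hp hr hs huc hud ((C2 _ _).1 h1) ((C2 _ _).1 h2))
        | exact congrArg _ (R hq hr hs hvc hvd ((B1 _ _).1 h1) ((B1 _ _).1 h2))
        | exact congrArg _ (L hq hr hs hvc hvd ((C1 _ _).1 h1) ((C1 _ _).1 h2))))

lemma fp_ne_a (k : ℕ) (p : ℕ × ℕ) : fp k p ≠ (1, 0) := by
  intro h
  apply CD_ab k p
  rw [h]; simp [CD]

lemma fp_ne_b (k : ℕ) (p : ℕ × ℕ) : fp k p ≠ (0, 1) := by
  intro h
  apply CD_ab k p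
  rw [h]; simp [CD]

lemma fp_inj (k : ℕ) (hk : 0 < k) : Function.Injective (fp k) := by
  intro p q h
  refine Prod.ext ((CD_b k p q).1 ?_) ((CD_a k hk p q).1 ?_) <;>
  · rw [h]; unfold CD; ring

lemma InT_eq (k : ℕ) (hk : 2 ≤ k) : {p | InT k p} =
    (((Finset.range k).image (fun i => (i, i)) ∪
      (Finset.range k).image (fun i => (i, if i + 1 = k then 0 else i + 1)) :
        Finset (ℕ × ℕ)) : Set (ℕ × ℕ)) := by
  ext ⟨x, r⟩
  simp only [InT, Set.mem_ofPred_eq, Finset.coe_union, Set.mem_union, Finset.coe_image,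
    Set.mem_image, Finset.coe_range, Set.mem_Iio, Prod.mk.injEq]
  constructor
  · rintro ⟨h, h1 | h1 | h1⟩
    · exact Or.inl ⟨x, h, rfl, h1.symm⟩
    · exact Or.inr ⟨x, h, rfl, by split_ifs <;> omega⟩
    · exact Or.inr ⟨x, h, rfl, by split_ifs <;> omega⟩
  · rintro (⟨i, h, rfl, rfl⟩ | ⟨i, h, rfl, h2⟩)
    · omega
    · split_ifs at h2 <;> omega

lemma InT_ncard (k : ℕ) (hk : 2 ≤ k) : {p | InT k p}.ncard = 2 * k := by
  rw [InT_eq k hk, Set.ncard_coe_finset, Finset.card_union_of_disjoint, Finset.card_image_of_injective,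
    Finset.card_image_of_injective, Finset.card_range]
  · omega
  · intro i j h
    exact (Prod.ext_iff.1 h).1
  · intro i j h
    exact (Prod.ext_iff.1 h).1
  · rw [Finset.disjoint_left]
    rintro ⟨x, r⟩ h1 h2
    simp only [Finset.mem_image, Finset.mem_range, Prod.mk.injEq] at h1 h2
    obtain ⟨i, hi, rfl, rfl⟩ := h1
    obtain ⟨j, hj, rfl, h⟩ := h2
    split_ifs at h <;> omega

lemma InT_finite (k : ℕ) (hk : 2 ≤ k) : {p | InT k p}.Finite := by
  rw [InT_eq k hk]; exact Finset.finite_toSet _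

lemma row_partner (k : ℕ) (hk : 2 ≤ k) (p : ℕ × ℕ) (hp : InT k p) :
    ∃ q, InT k q ∧ p.2 = q.2 ∧ q ≠ p := by
  obtain ⟨x, r⟩ := p
  simp only [InT] at hp
  have hr : r < k := by omega
  by_cases h : r = x
  · by_cases h0 : x = 0
    · refine ⟨(k - 1, r), ?_, rfl, ?_⟩
      · unfold InT; omega
      · rw [ne_eq, Prod.mk.injEq]; omega
    · refine ⟨(x - 1, r), ?_, rfl, ?_⟩
      · unfold InT; omega
      · rw [ne_eq, Prod.mk.injEq]; omega
  · refine ⟨(r, r), ?_, rfl, ?_⟩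
    · unfold InT; omega
    · rw [ne_eq, Prod.mk.injEq]; omega

lemma col_partner (k : ℕ) (hk : 2 ≤ k) (p : ℕ × ℕ) (hp : InT k p) :
    ∃ q, InT k q ∧ p.1 = q.1 ∧ q ≠ p := by
  obtain ⟨x, r⟩ := p
  simp only [InT] at hp
  by_cases h : r = x
  · by_cases h0 : x + 1 = k
    · refine ⟨(x, 0), ?_, rfl, ?_⟩
      · unfold InT; omega
      · rw [ne_eq, Prod.mk.injEq]; omega
    · refine ⟨(x, x + 1), ?_, rfl, ?_⟩
      · unfold InT; omega
      · rw [ne_eq, Prod.mk.injEq]; omega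
  · refine ⟨(x, x), ?_, rfl, ?_⟩
    · unfold InT; omega
    · rw [ne_eq, Prod.mk.injEq]; omega

/-- For every even `n > 6` there is a `3`-bounded
non-collinear set `V` of `n` points and a simple line `L_{a,b}` of `V` from
which no simple wedge can be created. -/
theorem even_size_no_wedge_from_some_simple_line (n : ℕ) (hn : Even n) (h6 : 6 < n) :
    ∃ V : Set (ℝ × ℝ), V.Finite ∧ V.ncard = n ∧ ThreeBounded V ∧
      ¬ Collinear ℝ V ∧
      ∃ a b, SimpleLine V a b ∧
        ¬ ∃ c ∈ V, c ≠ a ∧ c ≠ b ∧ (SimpleLine V a c ∨ SimpleLine V b c) := by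
  obtain ⟨k, hk2, rfl⟩ : ∃ k, 2 ≤ k ∧ n = 2 * k + 2 := by
    obtain ⟨m, hm⟩ := hn
    exact ⟨m - 1, by omega, by omega⟩
  have hk : 0 < k := by omega
  have hfin : (fp k '' {p | InT k p}).Finite := (InT_finite k hk2).image _
  have hVfin : (VV k).Finite := (hfin.insert _).insert _
  have ha : ((1, 0) : ℝ × ℝ) ∈ VV k := Or.inl rfl
  have hb : ((0, 1) : ℝ × ℝ) ∈ VV k := Or.inr (Or.inl rfl)
  have hf : ∀ p, InT k p → fp k p ∈ VV k := fun p hp => Or.inr (Or.inr ⟨p, hp, rfl⟩)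
  refine ⟨VV k, hVfin, ?_, ?_, ?_, (1, 0), (0, 1), ⟨ha, hb, by simp, ?_⟩, ?_⟩
  · unfold VV
    rw [Set.ncard_insert_of_notMem _ (hfin.insert _), Set.ncard_insert_of_notMem _ hfin,
      Set.ncard_image_of_injective _ (fp_inj k hk), InT_ncard k hk2]
    · rintro ⟨p, _, h⟩
      exact fp_ne_b k p h
    · rintro (h | ⟨p, _, h⟩)
      · simp at h
      · exact fp_ne_a k p h
  · intro u hu v hv huv
    simp only [col_iff]
    by_cases hex : ∃ c ∈ VV k, u ≠ c ∧ v ≠ c ∧ CD u v c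
    · obtain ⟨c, hc, huc, hvc, h1⟩ := hex
      have hsub : {d | d ∈ VV k ∧ CD u v d} ⊆ ({u, v, c} : Set (ℝ × ℝ)) := by
        rintro d ⟨hd, h2⟩
        by_cases hud : u = d
        · simp [hud]
        by_cases hvd : v = d
        · simp [hvd]
        have := third_unique k hk hu hv hc hd huv huc hvc hud hvd h1 h2
        simp [this]
      refine (Set.ncard_le_ncard hsub (by simp)).trans ?_
      refine (Set.ncard_insert_le _ _).trans ?_
      have := Set.ncard_insert_le v ({c} : Set (ℝ × ℝ))
      rw [Set.ncard_singleton] at this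
      omega
    · have hsub : {d | d ∈ VV k ∧ CD u v d} ⊆ ({u, v} : Set (ℝ × ℝ)) := by
        rintro d ⟨hd, h2⟩
        by_contra hne
        simp only [Set.mem_insert_iff, Set.mem_singleton_iff, not_or] at hne
        exact hex ⟨d, hd, Ne.symm hne.1, Ne.symm hne.2, h2⟩
      refine (Set.ncard_le_ncard hsub (by simp)).trans ?_
      have := Set.ncard_insert_le u ({v} : Set (ℝ × ℝ))
      rw [Set.ncard_singleton] at this
      omega
  · intro h
    have h0 : InT k (0, 0) := ⟨hk, Or.inl rfl⟩
    have : Collinear ℝ ({(1, 0), (0, 1), fp k (0, 0)} : Set (ℝ × ℝ)) := by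
      refine h.subset ?_
      rintro z (rfl | rfl | rfl)
      · exact ha
      · exact hb
      · exact hf _ h0
    exact CD_ab k _ ((col_iff _ _ _).1 this)
  · intro c hc h
    rw [col_iff] at h
    rcases VV_cases hc with h1 | h1 | ⟨p, _, rfl⟩
    · exact Or.inl h1
    · exact Or.inr h1
    · exact absurd h (CD_ab k p)
  · rintro ⟨c, hc, hca, hcb, h⟩
    rcases VV_cases hc with h1 | h1 | ⟨p, hp, rfl⟩
    · exact hca h1
    · exact hcb h1
    · rcases h with ⟨_, _, _, h⟩ | ⟨_, _, _, h⟩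
      · obtain ⟨q, hq, e, hne⟩ := row_partner k hk2 p hp
        rcases h (fp k q) (hf q hq) ((col_iff _ _ _).2 ((CD_a k hk p q).2 e)) with h | h
        · exact fp_ne_a k q h
        · exact hne (fp_inj k hk h)
      · obtain ⟨q, hq, e, hne⟩ := col_partner k hk2 p hp
        rcases h (fp k q) (hf q hq) ((col_iff _ _ _).2 ((CD_b k p q).2 e)) with h | h
        · exact fp_ne_b k q h
        · exact hne (fp_inj k hk h)
end

section
/- (Gallai–Sylvester) Let V be a finite set of at least 3 points in the real plane ℝ², not all contained in a single line. Then V spans a simple line: there exist distinct points a, b ∈ V such that no point of V other than a and b is collinear with a and b. -/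
/-- Twice the signed area of the triangle `p a b`. -/
def gsD (p a b : ℝ × ℝ) : ℝ := (a.1 - p.1) * (b.2 - p.2) - (a.2 - p.2) * (b.1 - p.1)

/-- Squared Euclidean distance. -/
def gsN (a b : ℝ × ℝ) : ℝ := (a.1 - b.1) ^ 2 + (a.2 - b.2) ^ 2

lemma gsN_pos {a b : ℝ × ℝ} (h : a ≠ b) : 0 < gsN a b := by
  have h0 : 0 ≤ gsN a b := by unfold gsN; positivity
  refine lt_of_le_of_ne h0 fun h1 => h ?_
  unfold gsN at h1
  ext
  · nlinarith [sq_nonneg (a.1 - b.1), sq_nonneg (a.2 - b.2)]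
  · nlinarith [sq_nonneg (a.1 - b.1), sq_nonneg (a.2 - b.2)]

lemma gs_param {a b c : ℝ × ℝ} (hab : a ≠ b) (h : Collinear ℝ ({a, b, c} : Set (ℝ × ℝ))) :
    ∃ r : ℝ, c.1 = a.1 + r * (b.1 - a.1) ∧ c.2 = a.2 + r * (b.2 - a.2) := by
  obtain ⟨v, hv⟩ := (collinear_iff_of_mem (p₀ := a) (by simp)).1 h
  obtain ⟨s, hs⟩ := hv b (by simp)
  obtain ⟨t, ht⟩ := hv c (by simp)
  have hs0 : s ≠ 0 := by
    rintro rfl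
    exact hab (by simpa using hs.symm)
  refine ⟨t / s, ?_, ?_⟩
  · rw [ht, hs]; simp; field_simp; ring
  · rw [ht, hs]; simp; field_simp; ring

lemma gs_exists (V : Set (ℝ × ℝ)) (h : ¬ Collinear ℝ V) :
    ∃ p ∈ V, ∃ a ∈ V, ∃ b ∈ V, gsD p a b ≠ 0 := by
  by_contra! hc
  apply h
  rcases V.subsingleton_or_nontrivial with hs | ⟨a, ha, b, hb, hab⟩
  · rcases hs.eq_empty_or_singleton with h | ⟨x, h⟩
    · rw [h]; exact collinear_empty ℝ _
    · rw [h]; exact collinear_singleton ℝ _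
  rw [collinear_iff_of_mem ha]
  refine ⟨b - a, fun c hcV => ?_⟩
  have hD := hc a ha b hb c hcV
  unfold gsD at hD
  by_cases h1 : b.1 - a.1 = 0
  · have h2 : b.2 - a.2 ≠ 0 := fun h2 => hab (by ext <;> linarith)
    refine ⟨(c.2 - a.2) / (b.2 - a.2), ?_⟩
    ext
    · simp [h1]
      rw [h1] at hD
      have : (b.2 - a.2) * (c.1 - a.1) = 0 := by linarith
      rcases mul_eq_zero.1 this with h | h
      · exact absurd h h2
      · linarith
    · simp; field_simp; ring
  · refine ⟨(c.1 - a.1) / (b.1 - a.1), ?_⟩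
    ext
    · simp; field_simp; ring
    · simp; field_simp; linarith

/-- Among three distinct reals, two lie on the same side of `s`. -/
lemma gs_three (s r : ℝ) (h0 : r ≠ 0) (h1 : r ≠ 1) :
    ∃ x y : ℝ, (x = 0 ∨ x = 1 ∨ x = r) ∧ (y = 0 ∨ y = 1 ∨ y = r) ∧ x ≠ y ∧
      (s - x) * (y - x) ≤ 0 := by
  have key : ∀ x y : ℝ, (x = 0 ∨ x = 1 ∨ x = r) → (y = 0 ∨ y = 1 ∨ y = r) → x ≠ y →
      0 ≤ (x - s) * (y - s) → ∃ x y : ℝ, (x = 0 ∨ x = 1 ∨ x = r) ∧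
      (y = 0 ∨ y = 1 ∨ y = r) ∧ x ≠ y ∧ (s - x) * (y - x) ≤ 0 := by
    intro x y hx hy hne h
    by_cases h' : (s - x) * (y - x) ≤ 0
    · exact ⟨x, y, hx, hy, hne, h'⟩
    · refine ⟨y, x, hy, hx, hne.symm, ?_⟩
      by_contra h''
      push Not at h' h''
      have hp := mul_pos h' h''
      have : 0 ≤ (x - s) * (y - s) * (x - y) ^ 2 := mul_nonneg h (sq_nonneg _)
      nlinarith
  rcases le_total 0 s with a | a <;> rcases le_total 1 s with b | b <;>
    rcases le_total r s with c | c <;>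
    first
    | exact key 0 1 (by simp) (by simp) (by simp) (by nlinarith)
    | exact key 0 r (by simp) (by simp) h0.symm (by nlinarith)
    | exact key 1 r (by simp) (by simp) h1.symm (by nlinarith)

/-- **Gallai–Sylvester.** Every finite set of at least `3`
points in the plane, not all on a line, spans a simple line. -/
theorem gallai_sylvester (V : Set (ℝ × ℝ)) (hfin : V.Finite)
    (h3 : 3 ≤ V.ncard) (hline : ¬ Collinear ℝ V) :
    ∃ a ∈ V, ∃ b ∈ V, a ≠ b ∧
      ∀ c ∈ V, Collinear ℝ ({a, b, c} : Set (ℝ × ℝ)) → c = a ∨ c = b := by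
  obtain ⟨p₀, hp₀, a₀, ha₀, b₀, hb₀, hD₀⟩ := gs_exists V hline
  let T : Set ((ℝ × ℝ) × (ℝ × ℝ) × (ℝ × ℝ)) :=
    {t ∈ V ×ˢ V ×ˢ V | gsD t.1 t.2.1 t.2.2 ≠ 0}
  have hT : T.Finite := (hfin.prod (hfin.prod hfin)).subset (Set.sep_subset _ _)
  obtain ⟨⟨p, a, b⟩, ⟨⟨hp, ha, hb⟩, hD⟩, hmin⟩ :=
    Set.exists_min_image T (fun t => gsD t.1 t.2.1 t.2.2 ^ 2 / gsN t.2.1 t.2.2) hT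
      ⟨(p₀, a₀, b₀), ⟨hp₀, ha₀, hb₀⟩, hD₀⟩
  dsimp only at hp ha hb hD hmin
  have hab : a ≠ b := by
    rintro rfl
    apply hD
    unfold gsD
    ring
  refine ⟨a, ha, b, hb, hab, fun c hc hcol => ?_⟩
  by_contra! hne
  obtain ⟨r, hr1, hr2⟩ := gs_param hab hcol
  have hr0 : r ≠ 0 := by
    rintro rfl
    exact hne.1 (by ext <;> linarith)
  have hr1' : r ≠ 1 := by
    rintro rfl
    exact hne.2 (by ext <;> linarith)
  have hN := gsN_pos hab
  obtain ⟨x, y, hx, hy, hxy, hle⟩ := gs_three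
    (((p.1 - a.1) * (b.1 - a.1) + (p.2 - a.2) * (b.2 - a.2)) / gsN a b) r hr0 hr1'
  have pt : ∀ x : ℝ, (x = 0 ∨ x = 1 ∨ x = r) →
      ((a.1 + x * (b.1 - a.1), a.2 + x * (b.2 - a.2)) : ℝ × ℝ) ∈ V := by
    rintro x (rfl | rfl | rfl)
    · simpa using ha
    · simpa using hb
    · rwa [← hr1, ← hr2]
  set X : ℝ × ℝ := (a.1 + x * (b.1 - a.1), a.2 + x * (b.2 - a.2)) with hX
  set Y : ℝ × ℝ := (a.1 + y * (b.1 - a.1), a.2 + y * (b.2 - a.2)) with hY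
  have hXV : X ∈ V := pt x hx
  have hYV : Y ∈ V := pt y hy
  have hDXY : gsD X p Y = (x - y) * gsD p a b := by
    simp only [gsD, hX, hY]; ring
  have hD' : gsD X p Y ≠ 0 := by
    rw [hDXY]; exact mul_ne_zero (sub_ne_zero.2 hxy) hD
  have hpY : p ≠ Y := by
    intro h
    apply hD'
    rw [← h]
    unfold gsD
    ring
  have hpX : p ≠ X := by
    intro h
    apply hD'
    rw [← h]
    unfold gsD
    ring
  have hm := hmin (X, p, Y) ⟨⟨hXV, hp, hYV⟩, hD'⟩
  dsimp only at hm
  rw [hDXY, div_le_div_iff₀ hN (gsN_pos hpY)] at hm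
  have hle2 : ((p.1 - a.1) * (b.1 - a.1) + (p.2 - a.2) * (b.2 - a.2) - x * gsN a b)
      * (y - x) ≤ 0 := by
    have h := mul_nonpos_of_nonneg_of_nonpos hN.le hle
    have e : ∀ q : ℝ, gsN a b * ((q / gsN a b - x) * (y - x)) =
        (q - x * gsN a b) * (y - x) := by
      intro q; field_simp
    rwa [e] at h
  have hexp : gsN p Y = gsN p X + (y - x) ^ 2 * gsN a b
      - 2 * (((p.1 - a.1) * (b.1 - a.1) + (p.2 - a.2) * (b.2 - a.2) - x * gsN a b)
      * (y - x)) := by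
    simp only [gsN, hX, hY]; ring
  have hlt : (y - x) ^ 2 * gsN a b < gsN p Y := by
    have := gsN_pos hpX
    linarith
  have hD2 : 0 < gsD p a b ^ 2 := by positivity
  have := mul_lt_mul_of_pos_left hlt hD2
  nlinarith
end
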